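/- arXiv:2308.07483 — 3 statements merged into one kernel-verified Lean document; each statement's English description precedes it below -/
import Mathlib

section
/- Let λ : ℝ → ℝ be twice differentiable and strictly positive on (0,∞), and let Λ : ℝ → ℝ be a function such that for all t > 0 both SIV vacuum equations hold: 3·(λ'(t)/λ(t))² = Λ(t) and 2·λ''(t)/λ(t) − (λ'(t)/λ(t))² = Λ(t). Define Λ_E(t) = Λ(t)/λ(t)². Then for all t > 0, Λ_E(t) = 3·λ'(t)²/λ(t)⁴, and Λ_E is constant on (0,∞), i.e. the derivative of t ↦ 3·λ'(t)²/λ(t)⁴ vanishes for every t > 0. -/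
/-! Eliminating `Λ` from the two vacuum equations gives `λ'' / λ = 2 (λ' / λ)²`. This says exactly
that `λ' / λ² = -(1 / λ)'` has derivative zero, and `Λ_E` is three times the square of that
function. -/

theorem div_eq_two_mul_sq_of_vacuum_eqs {K : Type*} [Field K] [NeZero (2 : K)]
    {lam lam' lam'' Λ : K} (heq1 : 3 * (lam' / lam) ^ 2 = Λ)
    (heq2 : 2 * lam'' / lam - (lam' / lam) ^ 2 = Λ) :
    lam'' / lam = 2 * (lam' / lam) ^ 2 := by
  apply mul_left_cancel₀ (two_ne_zero : (2 : K) ≠ 0)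
  linear_combination heq2 - heq1

section Derivatives

variable {𝕜 : Type*} [NontriviallyNormedField 𝕜] {t : 𝕜}

theorem hasDerivAt_div_sq {f g : 𝕜 → 𝕜} {f' g' : 𝕜} (hf : HasDerivAt f f' t)
    (hg : HasDerivAt g g' t) (hne : f t ≠ 0) :
    HasDerivAt (fun s => g s / f s ^ 2) ((g' * f t - 2 * g t * f') / f t ^ 3) t := by
  refine (hg.fun_div (hf.fun_pow 2) (pow_ne_zero 2 hne)).congr_deriv ?_
  push_cast
  field_simp

theorem hasDerivAt_deriv_div_sq_zero {f f' : 𝕜 → 𝕜} {f'' : 𝕜} (hf : HasDerivAt f (f' t) t)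
    (hf' : HasDerivAt f' f'' t) (hne : f t ≠ 0) (hode : f'' / f t = 2 * (f' t / f t) ^ 2) :
    HasDerivAt (fun s => f' s / f s ^ 2) 0 t := by
  have hnum : f'' * f t - 2 * f' t * f' t = 0 := by
    field_simp at hode
    linear_combination hode
  simpa only [hnum, zero_div] using hasDerivAt_div_sq hf hf' hne

theorem siv_gauge_lambdaE_constant_general [NeZero (2 : 𝕜)] {lam lam' : 𝕜 → 𝕜} {lam'' Λ : 𝕜}
    (hlam : HasDerivAt lam (lam' t) t) (hlam' : HasDerivAt lam' lam'' t) (hne : lam t ≠ 0)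
    (heq1 : 3 * (lam' t / lam t) ^ 2 = Λ)
    (heq2 : 2 * lam'' / lam t - (lam' t / lam t) ^ 2 = Λ) :
    Λ / lam t ^ 2 = 3 * lam' t ^ 2 / lam t ^ 4 ∧
      HasDerivAt (fun s => 3 * lam' s ^ 2 / lam s ^ 4) 0 t := by
  have lambdaE_eq (s : 𝕜) : 3 * lam' s ^ 2 / lam s ^ 4 = 3 * (lam' s / lam s ^ 2) ^ 2 := by ring
  have hconst : HasDerivAt (fun s => lam' s / lam s ^ 2) 0 t :=
    hasDerivAt_deriv_div_sq_zero hlam hlam' hne (div_eq_two_mul_sq_of_vacuum_eqs heq1 heq2)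
  constructor
  · rw [← heq1]
    ring
  · simpa only [lambdaE_eq, mul_zero] using (hconst.fun_pow 2).const_mul 3

end Derivatives

/-- SIV gauge: from the pair of SIV vacuum equations (i) `3(λ'/λ)² = Λ` and
(ii) `2λ''/λ − (λ'/λ)² = Λ`, with `Λ_E = Λ/λ²`, one gets `Λ_E = 3λ'²/λ⁴`
and `Λ_E` is constant on `(0,∞)`. -/
theorem siv_gauge_lambdaE_constant
    (lam Λ : ℝ → ℝ)
    (hpos : ∀ t > (0 : ℝ), 0 < lam t)
    (hdiff : ∀ t > (0 : ℝ), DifferentiableAt ℝ lam t)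
    (hdiff' : ∀ t > (0 : ℝ), DifferentiableAt ℝ (deriv lam) t)
    (heq1 : ∀ t > (0 : ℝ), 3 * (deriv lam t / lam t) ^ 2 = Λ t)
    (heq2 : ∀ t > (0 : ℝ),
      2 * deriv (deriv lam) t / lam t - (deriv lam t / lam t) ^ 2 = Λ t) :
    (∀ t > (0 : ℝ), Λ t / (lam t) ^ 2 = 3 * (deriv lam t) ^ 2 / (lam t) ^ 4) ∧
    (∀ t > (0 : ℝ),
      deriv (fun s => 3 * (deriv lam s) ^ 2 / (lam s) ^ 4) t = 0) := by
  have lambdaE (t : ℝ) (ht : t > 0) := siv_gauge_lambdaE_constant_general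
    (hdiff t ht).hasDerivAt (hdiff' t ht).hasDerivAt (hpos t ht).ne' (heq1 t ht) (heq2 t ht)
  exact ⟨fun t ht => (lambdaE t ht).1, fun t ht => (lambdaE t ht).2.deriv⟩
end

section
/- Let Λ_E > 0 be a real constant and set t₀ = √(3/Λ_E). Then the function λ(t) = t₀/t is strictly positive and twice differentiable on (0,∞), and with Λ(t) = λ(t)²·Λ_E it satisfies all four SIV vacuum equations for every t > 0: (i) 3(λ'(t)/λ(t))² = Λ(t), (ii) 2λ''(t)/λ(t) − (λ'(t)/λ(t))² = Λ(t), (iii) λ''(t)/λ(t) = 2(λ'(t)/λ(t))², and (iv) λ''(t)/λ(t) − (λ'(t)/λ(t))² = Λ(t)/3. -/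
open Real

/-!
Equations (ii) and (iv) are algebraic consequences of (i) and (iii). Equation (iii) holds for
`t ↦ c / t` with any `c ≠ 0`, because its logarithmic derivative is `-1 / t` and its relative second
derivative is `2 / t ^ 2`. Equation (i) then reads `3 / t ^ 2 = (c / t) ^ 2 * Λ_E`, that is
`c ^ 2 * Λ_E = 3`, which is what selects `c = √(3 / Λ_E)`.
-/

section VacuumAlgebra

variable {K : Type*} [Field K] {l l' l'' Λ : K}

theorem siv_second_of_first_of_third (first : 3 * (l' / l) ^ 2 = Λ)
    (third : l'' / l = 2 * (l' / l) ^ 2) : 2 * l'' / l - (l' / l) ^ 2 = Λ := by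
  linear_combination 2 * third + first

theorem siv_fourth_of_first_of_third [NeZero (3 : K)] (first : 3 * (l' / l) ^ 2 = Λ)
    (third : l'' / l = 2 * (l' / l) ^ 2) : l'' / l - (l' / l) ^ 2 = Λ / 3 := by
  rw [eq_div_iff (NeZero.ne (3 : K))]
  linear_combination 3 * third + first

end VacuumAlgebra

section ConstDiv

variable {𝕜 : Type*} [NontriviallyNormedField 𝕜] {c x : 𝕜}

theorem hasDerivAt_deriv_const_div_id (c : 𝕜) (hx : x ≠ 0) :
    HasDerivAt (deriv fun y => c / y) (2 * c / x ^ 3) x := by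
  have deriv_eq : (deriv fun y => c / y) = fun y => -c / y ^ 2 :=
    funext fun _ => deriv_const_div_id c
  rw [deriv_eq]
  refine ((hasDerivAt_const x (-c)).fun_div (hasDerivAt_pow 2 x) (pow_ne_zero 2 hx)).congr_deriv ?_
  push_cast
  field_simp
  ring

theorem logDeriv_const_div_id (hc : c ≠ 0) (x : 𝕜) : logDeriv (fun y => c / y) x = -1 / x := by
  simp only [div_eq_mul_inv, logDeriv_const_mul x c hc, logDeriv_inv, neg_mul, one_mul]

theorem deriv_deriv_const_div_id_div_eq_two_mul_logDeriv_sq (hc : c ≠ 0) (hx : x ≠ 0) :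
    deriv (deriv fun y => c / y) x / (c / x) = 2 * logDeriv (fun y => c / y) x ^ 2 := by
  rw [(hasDerivAt_deriv_const_div_id c hx).deriv, logDeriv_const_div_id hc]
  field_simp

theorem mul_logDeriv_const_div_id_sq {a L : 𝕜} (hc : c ≠ 0) (hcL : c ^ 2 * L = a) (x : 𝕜) :
    a * logDeriv (fun y => c / y) x ^ 2 = (c / x) ^ 2 * L := by
  rw [logDeriv_const_div_id hc, ← hcL]
  ring

end ConstDiv

theorem sqrt_div_sq_mul_cancel {a b : ℝ} (ha : 0 ≤ a) (hb : 0 < b) : √(a / b) ^ 2 * b = a := by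
  rw [sq_sqrt (div_nonneg ha hb.le), div_mul_cancel₀ a hb.ne']

/-- The SIV solution: `λ(t) = t₀/t` with `t₀ = √(3/Λ_E)` is positive and twice
differentiable on `(0,∞)` and, with `Λ(t) = λ(t)²·Λ_E`, satisfies all four SIV
vacuum equations. -/
theorem siv_solution_satisfies_vacuum_equations
    (ΛE : ℝ) (hΛE : 0 < ΛE) :
    let t₀ : ℝ := Real.sqrt (3 / ΛE)
    let lam : ℝ → ℝ := fun t => t₀ / t
    let Λ : ℝ → ℝ := fun t => (lam t) ^ 2 * ΛE
    ∀ t > (0 : ℝ),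
      0 < lam t ∧
      DifferentiableAt ℝ lam t ∧
      DifferentiableAt ℝ (deriv lam) t ∧
      3 * (deriv lam t / lam t) ^ 2 = Λ t ∧
      2 * deriv (deriv lam) t / lam t - (deriv lam t / lam t) ^ 2 = Λ t ∧
      deriv (deriv lam) t / lam t = 2 * (deriv lam t / lam t) ^ 2 ∧
      deriv (deriv lam) t / lam t - (deriv lam t / lam t) ^ 2 = Λ t / 3 := by
  intro t₀ lam Λ t ht
  have t₀_pos : 0 < t₀ := sqrt_pos.mpr (div_pos three_pos hΛE)
  have first : 3 * (deriv lam t / lam t) ^ 2 = Λ t :=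
    mul_logDeriv_const_div_id_sq t₀_pos.ne' (sqrt_div_sq_mul_cancel zero_le_three hΛE) t
  have third : deriv (deriv lam) t / lam t = 2 * (deriv lam t / lam t) ^ 2 :=
    deriv_deriv_const_div_id_div_eq_two_mul_logDeriv_sq t₀_pos.ne' ht.ne'
  exact ⟨div_pos t₀_pos ht,
    (differentiableAt_const t₀).fun_div differentiableAt_id ht.ne',
    (hasDerivAt_deriv_const_div_id t₀ ht.ne').differentiableAt,
    first,
    siv_second_of_first_of_third first third,
    third,
    siv_fourth_of_first_of_third first third⟩
end

section
/- Let t₀ > 0, set Λ_E = 3/t₀² and λ(t) = t₀/t for t > 0. Then for every t > 0 the following two identities hold: (a) λ'(t)²/λ(t)² = Λ_E·λ(t)²/3, and (b) 2·λ''(t)/λ(t) − λ'(t)²/λ(t)² = Λ_E·λ(t)². Consequently, for any differentiable scale factor a : (0,∞) → (0,∞), any density ρ(t), pressure p(t), curvature constant k, and gravitational constant G > 0, the scale-invariant Friedmann equations 8πGρ/3 = k/a² + (a'/a)² + 2(a'λ')/(aλ) + (λ'/λ)² − Λ_E·λ²/3 and −8πGp = k/a² + 2a''/a + 2λ''/λ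 + (a'/a)² + 4(a'λ')/(aλ) − (λ'/λ)² − Λ_E·λ² hold at t if and only if the equations 8πGρ/3 = k/a² + (a'/a)² + 2(a'λ')/(aλ) and −8πGp = k/a² + 2a''/a + (a'/a)² + 4(a'λ')/(aλ) hold at t; i.e., in the SIV gauge the cosmological constant disappears from the cosmological equations. -/
open Real

/-!
The gauge `λ(t) = t₀/t` solves the Riccati equation `λ' = c λ²` with `c = -1/t₀`. Differentiating
once more gives `λ'' = 2c²λ³`, so `(λ'/λ)² = c²λ²` and `2λ''/λ = 4c²λ²`. With `Λ_E = 3c²`, these two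
relations cancel all the terms without `a` or `k` in both Friedmann equations.
-/

open scoped Topology

section Riccati

variable {𝕜 : Type*} [NontriviallyNormedField 𝕜] {f : 𝕜 → 𝕜} {c t : 𝕜}

theorem hasDerivAt_const_div_riccati (hc : c ≠ 0) (ht : t ≠ 0) :
    HasDerivAt (fun s ↦ c / s) (-c⁻¹ * (c / t) ^ 2) t := by
  have h : HasDerivAt (fun s ↦ c / s) (c * -(t ^ 2)⁻¹) t := by
    simpa only [div_eq_mul_inv] using (hasDerivAt_inv ht).const_mul c
  convert h using 1
  field_simp

theorem deriv_deriv_of_riccati (hf : ∀ᶠ s in 𝓝 t, HasDerivAt f (c * f s ^ 2) s) :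
    deriv (deriv f) t = 2 * c ^ 2 * f t ^ 3 := by
  have deriv_f : deriv f =ᶠ[𝓝 t] fun s ↦ c * f s ^ 2 := hf.mono fun _ hs ↦ hs.deriv
  rw [deriv_f.deriv_eq, ((hf.self_of_nhds.fun_pow 2).const_mul c).deriv]
  push_cast
  ring

theorem deriv_sq_div_sq_of_riccati (hf : HasDerivAt f (c * f t ^ 2) t) (hft : f t ≠ 0) :
    deriv f t ^ 2 / f t ^ 2 = c ^ 2 * f t ^ 2 := by
  rw [hf.deriv, div_eq_iff (pow_ne_zero 2 hft)]
  ring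

theorem deriv_deriv_div_of_riccati (hf : ∀ᶠ s in 𝓝 t, HasDerivAt f (c * f s ^ 2) s)
    (hft : f t ≠ 0) : deriv (deriv f) t / f t = 2 * c ^ 2 * f t ^ 2 := by
  rw [deriv_deriv_of_riccati hf, div_eq_iff hft]
  ring

end Riccati

/-- The scale-invariant Friedmann equations at the instant `t`, for the conformal factor `lam`, the
scale factor `a`, the cosmological constant `Λ`, the curvature constant `k`, the gravitational
constant `G`, and the values `ρ`, `p` of the density and the pressure at `t`. -/
def ScaleInvariantFriedmannAt (lam a : ℝ → ℝ) (Λ k G ρ p t : ℝ) : Prop :=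
  8 * π * G * ρ / 3 =
      k / (a t) ^ 2 + (deriv a t / a t) ^ 2 + 2 * (deriv a t * deriv lam t) / (a t * lam t) +
        (deriv lam t / lam t) ^ 2 - Λ * (lam t) ^ 2 / 3 ∧
    -(8 * π * G * p) =
      k / (a t) ^ 2 + 2 * deriv (deriv a) t / a t + 2 * deriv (deriv lam) t / lam t +
        (deriv a t / a t) ^ 2 + 4 * (deriv a t * deriv lam t) / (a t * lam t) -
        (deriv lam t / lam t) ^ 2 - Λ * (lam t) ^ 2

/-- The Friedmann equations of the SIV gauge at the instant `t`: here `lam` enters only through its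
coupling to the expansion rate of `a`, and there is no cosmological constant. The arguments are
those of `ScaleInvariantFriedmannAt`. -/
def SIVFriedmannAt (lam a : ℝ → ℝ) (k G ρ p t : ℝ) : Prop :=
  8 * π * G * ρ / 3 =
      k / (a t) ^ 2 + (deriv a t / a t) ^ 2 + 2 * (deriv a t * deriv lam t) / (a t * lam t) ∧
    -(8 * π * G * p) =
      k / (a t) ^ 2 + 2 * deriv (deriv a) t / a t + (deriv a t / a t) ^ 2 +
        4 * (deriv a t * deriv lam t) / (a t * lam t)

theorem scaleInvariantFriedmannAt_iff_sivFriedmannAt {lam : ℝ → ℝ} {Λ t : ℝ}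
    (first_order : deriv lam t ^ 2 / lam t ^ 2 = Λ * lam t ^ 2 / 3)
    (second_order :
      2 * deriv (deriv lam) t / lam t - deriv lam t ^ 2 / lam t ^ 2 = Λ * lam t ^ 2)
    (a : ℝ → ℝ) (k G ρ p : ℝ) :
    ScaleInvariantFriedmannAt lam a Λ k G ρ p t ↔ SIVFriedmannAt lam a k G ρ p t := by
  rw [← div_pow] at first_order second_order
  refine and_congr (Eq.congr_right ?_) (Eq.congr_right ?_)
  · linear_combination first_order
  · linear_combination second_order

theorem siv_gauge_friedmann_no_cosmological_constant_general {lam : ℝ → ℝ} {c t : ℝ}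
    (riccati : ∀ᶠ s in 𝓝 t, HasDerivAt lam (c * lam s ^ 2) s) (hlam : lam t ≠ 0)
    {Λ : ℝ} (hΛ : Λ = 3 * c ^ 2) :
    (deriv lam t ^ 2 / lam t ^ 2 = Λ * lam t ^ 2 / 3 ∧
      2 * deriv (deriv lam) t / lam t - deriv lam t ^ 2 / lam t ^ 2 = Λ * lam t ^ 2) ∧
    ∀ (a : ℝ → ℝ) (k G ρ p : ℝ), a t ≠ 0 → DifferentiableAt ℝ a t →
      (ScaleInvariantFriedmannAt lam a Λ k G ρ p t ↔ SIVFriedmannAt lam a k G ρ p t) := by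
  have lam_rate := deriv_sq_div_sq_of_riccati riccati.self_of_nhds hlam
  have lam_acceleration := deriv_deriv_div_of_riccati riccati hlam
  have first_order : deriv lam t ^ 2 / lam t ^ 2 = Λ * lam t ^ 2 / 3 := by
    rw [lam_rate, hΛ]
    ring
  have second_order :
      2 * deriv (deriv lam) t / lam t - deriv lam t ^ 2 / lam t ^ 2 = Λ * lam t ^ 2 := by
    rw [mul_div_assoc, lam_acceleration, lam_rate, hΛ]
    ring
  exact ⟨⟨first_order, second_order⟩, fun a k G ρ p _ _ ↦
    scaleInvariantFriedmannAt_iff_sivFriedmannAt first_order second_order a k G ρ p⟩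

/-- In the SIV gauge `λ(t) = t₀/t`, `Λ_E = 3/t₀²`, the identities
(a) `λ'²/λ² = Λ_E·λ²/3` and (b) `2λ''/λ − λ'²/λ² = Λ_E·λ²` hold, and hence
the cosmological constant disappears from the scale-invariant Friedmann
equations. -/
theorem siv_gauge_friedmann_no_cosmological_constant
    (t₀ : ℝ) (ht₀ : 0 < t₀) :
    let ΛE : ℝ := 3 / t₀ ^ 2
    let lam : ℝ → ℝ := fun t => t₀ / t
    (∀ t > (0 : ℝ),
      (deriv lam t) ^ 2 / (lam t) ^ 2 = ΛE * (lam t) ^ 2 / 3 ∧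
      2 * deriv (deriv lam) t / lam t - (deriv lam t) ^ 2 / (lam t) ^ 2 =
        ΛE * (lam t) ^ 2) ∧
    (∀ (a ρ p : ℝ → ℝ) (k G : ℝ), 0 < G →
      (∀ s > (0 : ℝ), 0 < a s) → (∀ s > (0 : ℝ), DifferentiableAt ℝ a s) →
      ∀ t > (0 : ℝ),
        ((8 * π * G * ρ t / 3 =
            k / (a t) ^ 2 + (deriv a t / a t) ^ 2 +
              2 * (deriv a t * deriv lam t) / (a t * lam t) +
              (deriv lam t / lam t) ^ 2 - ΛE * (lam t) ^ 2 / 3 ∧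
          -(8 * π * G * p t) =
            k / (a t) ^ 2 + 2 * deriv (deriv a) t / a t +
              2 * deriv (deriv lam) t / lam t + (deriv a t / a t) ^ 2 +
              4 * (deriv a t * deriv lam t) / (a t * lam t) -
              (deriv lam t / lam t) ^ 2 - ΛE * (lam t) ^ 2) ↔
        (8 * π * G * ρ t / 3 =
            k / (a t) ^ 2 + (deriv a t / a t) ^ 2 +
              2 * (deriv a t * deriv lam t) / (a t * lam t) ∧
          -(8 * π * G * p t) =
            k / (a t) ^ 2 + 2 * deriv (deriv a) t / a t +
              (deriv a t / a t) ^ 2 +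
              4 * (deriv a t * deriv lam t) / (a t * lam t)))) := by
  intro ΛE lam
  have no_cosmological_constant (t : ℝ) (ht : 0 < t) :=
    siv_gauge_friedmann_no_cosmological_constant_general (lam := lam) (Λ := ΛE)
      ((eventually_ne_nhds ht.ne').mono fun _ ↦ hasDerivAt_const_div_riccati ht₀.ne')
      (div_pos ht₀ ht).ne' (by ring)
  exact ⟨fun t ht ↦ (no_cosmological_constant t ht).1, fun a ρ p k G _ ha a_diff t ht ↦
    (no_cosmological_constant t ht).2 a k G (ρ t) (p t) (ha t ht).ne' (a_diff t ht)⟩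
end
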